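/- The domination number of the complement of the Shrikhande graph equals 3: there exist three vertices S = {s1, s2, s3} such that every vertex not in S is adjacent (in the complement of the Shrikhande graph) to some vertex of S, but for any two vertices u, v there exists a vertex w with w ∉ {u, v} that is adjacent to neither u nor v. -/

import Mathlib

/-- The Shrikhande graph on `(ZMod 4) × (ZMod 4)`: distinct vertices `(a,b)` and `(c,d)` are
adjacent iff `(a-c, b-d) ∈ {(0,1),(0,3),(1,0),(3,0),(1,1),(3,3)}` (arithmetic mod 4; this
difference set is closed under negation, so the symmetrization `fromRel` does not change it). -/
def shrikhande : SimpleGraph (ZMod 4 × ZMod 4) :=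
  SimpleGraph.fromRel (fun u v =>
    (u.1 - v.1, u.2 - v.2) ∈
      ({(0, 1), (0, 3), (1, 0), (3, 0), (1, 1), (3, 3)} : Finset (ZMod 4 × ZMod 4)))

/-!
A set dominates the complement of `G` exactly when its members have no common neighbour in `G`.
The Shrikhande graph is strongly regular with parameters `(16, 6, 2, 2)`, because its connection set
is a partial difference set in `(ZMod 4)²`. Hence any two vertices have a common neighbour, so no
pair dominates the complement. On the other hand two adjacent vertices have only `2` common
neighbours, which together see at most `2 * 6 < 16` vertices; a third vertex that they do not see
completes a dominating triple.
-/

open Finset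

section Domination

variable {V : Type*} {G : SimpleGraph V}

/-- `S` is a dominating set of `G`: every vertex outside `S` has a neighbor in `S`. -/
def IsDominating (G : SimpleGraph V) (S : Set V) : Prop :=
  ∀ x ∉ S, ∃ s ∈ S, G.Adj x s

theorem isDominating_compl_iff {S : Set V} :
    IsDominating Gᶜ S ↔ ∀ x, ∃ s ∈ S, ¬G.Adj x s := by
  refine ⟨fun h x ↦ ?_, fun h x hx ↦ ?_⟩
  · by_cases hx : x ∈ S
    · exact ⟨x, hx, G.irrefl⟩
    · obtain ⟨s, hs, hxs⟩ := h x hx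
      exact ⟨s, hs, hxs.2⟩
  · obtain ⟨s, hs, hxs⟩ := h x
    exact ⟨s, hs, (ne_of_mem_of_not_mem hs hx).symm, hxs⟩

theorem not_isDominating_compl_pair_iff {u v : V} :
    ¬IsDominating Gᶜ {u, v} ↔ (G.commonNeighbors u v).Nonempty := by
  simp [isDominating_compl_iff, Set.Nonempty, SimpleGraph.mem_commonNeighbors, G.adj_comm]

variable [Fintype V] [DecidableRel G.Adj]

theorem exists_forall_mem_not_adj_of_card_mul_maxDegree_lt {T : Finset V}
    (h : #T * G.maxDegree < Fintype.card V) : ∃ w, ∀ x ∈ T, ¬G.Adj x w := by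
  classical
  have hcard : #(T.biUnion (G.neighborFinset ·)) < #(univ : Finset V) :=
    (card_biUnion_le_card_mul _ _ _ fun x _ ↦ G.degree_le_maxDegree x).trans_lt h
  obtain ⟨w, -, hw⟩ := exists_mem_notMem_of_card_lt_card hcard
  exact ⟨w, by simpa using hw⟩

theorem exists_isDominating_compl_triple {u v : V}
    (h : Fintype.card (G.commonNeighbors u v) * G.maxDegree < Fintype.card V) :
    ∃ w, IsDominating Gᶜ {u, v, w} := by
  rw [← Set.toFinset_card] at h
  obtain ⟨w, hw⟩ := exists_forall_mem_not_adj_of_card_mul_maxDegree_lt h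
  refine ⟨w, isDominating_compl_iff.2 fun x ↦ ?_⟩
  by_contra! hx
  have hxu : G.Adj x u := hx u (by simp)
  have hxv : G.Adj x v := hx v (by simp)
  exact hw x (by simpa using ⟨hxu.symm, hxv.symm⟩) (hx w (by simp))

end Domination

section StronglyRegular

variable {V : Type*} [Fintype V] {G : SimpleGraph V} [DecidableRel G.Adj] {n k ℓ μ : ℕ}

theorem commonNeighbors_nonempty_of_isSRGWith (h : G.IsSRGWith n k ℓ μ)
    (hk : 0 < k) (hℓ : 0 < ℓ) (hμ : 0 < μ) (u v : V) : (G.commonNeighbors u v).Nonempty := by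
  rcases eq_or_ne u v with rfl | huv
  · obtain ⟨w, hw⟩ := (G.degree_pos_iff_exists_adj u).1 (by rwa [h.regular.degree_eq])
    exact ⟨w, hw, hw⟩
  · rw [← Set.nonempty_coe_sort, ← Fintype.card_pos_iff]
    by_cases hadj : G.Adj u v
    · rwa [h.of_adj u v hadj]
    · rwa [h.of_not_adj huv hadj]

theorem complement_shrikhande_domination_number_three_general (h : G.IsSRGWith n k ℓ μ)
    (hk : 0 < k) (hℓ : 0 < ℓ) (hμ : 0 < μ) (hn : ℓ * k < n) :
    (∃ s1 s2 s3, IsDominating Gᶜ {s1, s2, s3}) ∧ ∀ u v, ¬IsDominating Gᶜ {u, v} := by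
  refine ⟨?_, fun u v ↦ not_isDominating_compl_pair_iff.2 <|
    commonNeighbors_nonempty_of_isSRGWith h hk hℓ hμ u v⟩
  obtain ⟨u⟩ : Nonempty V := Fintype.card_pos_iff.1 (h.card ▸ Nat.zero_lt_of_lt hn)
  obtain ⟨v, huv⟩ := (G.degree_pos_iff_exists_adj u).1 (by rwa [h.regular.degree_eq])
  have hmax : G.maxDegree ≤ k := G.maxDegree_le_of_forall_degree_le k fun x ↦ (h.regular x).le
  have hlt : Fintype.card (G.commonNeighbors u v) * G.maxDegree < Fintype.card V := by
    rw [h.of_adj u v huv, h.card]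
    exact (Nat.mul_le_mul_left ℓ hmax).trans_lt hn
  exact ⟨u, v, exists_isDominating_compl_triple hlt⟩

end StronglyRegular

section PartialDifferenceSet

variable {A : Type*} [AddGroup A]

theorem circulantGraph_adj_iff_sub_mem {D : Set A} (h0 : 0 ∉ D) (hneg : ∀ d ∈ D, -d ∈ D)
    {u v : A} : (SimpleGraph.circulantGraph D).Adj u v ↔ v - u ∈ D := by
  have hsymm : u - v ∈ D → v - u ∈ D := fun h ↦ neg_sub u v ▸ hneg _ h
  have hne : v - u ∈ D → u ≠ v := by
    rintro h rfl
    exact h0 (sub_self u ▸ h)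
  rw [SimpleGraph.circulantGraph_adj]
  tauto

variable [DecidableEq A]

theorem card_commonNeighbors_circulantGraph [Fintype A] {D : Finset A} (h0 : 0 ∉ D)
    (hneg : ∀ d ∈ D, -d ∈ D) (u v : A) :
    Fintype.card ((SimpleGraph.circulantGraph (D : Set A)).commonNeighbors u v) =
      #{t ∈ D | t - (v - u) ∈ D} := by
  have htranslate : ((SimpleGraph.circulantGraph (D : Set A)).commonNeighbors u v).toFinset =
      {t ∈ D | t - (v - u) ∈ D}.map (Equiv.addRight u).toEmbedding := by
    ext w
    have hsub : w - u - (v - u) = w - v := sub_sub_sub_cancel_right w v u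
    simp only [Set.mem_toFinset, SimpleGraph.mem_commonNeighbors, mem_map_equiv, mem_filter,
      circulantGraph_adj_iff_sub_mem (D := (D : Set A)) h0 hneg, mem_coe,
      Equiv.addRight_symm, Equiv.coe_addRight, ← sub_eq_add_neg, hsub]
  rw [← Set.toFinset_card, htranslate, card_map]

/-- `D` is a regular partial difference set (symmetric, without `0`): each nonzero `d` is a
difference of two elements of `D` in `ℓ` ways if `d ∈ D` and in `μ` ways if `d ∉ D`. A
representation of `d` as a difference is encoded by the `t ∈ D` with `t - d ∈ D`. -/
structure IsPartialDifferenceSet (D : Finset A) (ℓ μ : ℕ) : Prop where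
  zero_notMem : 0 ∉ D
  neg_mem : ∀ d ∈ D, -d ∈ D
  card_of_mem : ∀ d ∈ D, #{t ∈ D | t - d ∈ D} = ℓ
  card_of_notMem : ∀ d ∉ D, d ≠ 0 → #{t ∈ D | t - d ∈ D} = μ

theorem IsPartialDifferenceSet.isSRGWith [Fintype A] {D : Finset A} {ℓ μ : ℕ}
    (h : IsPartialDifferenceSet D ℓ μ) :
    (SimpleGraph.circulantGraph (D : Set A)).IsSRGWith (Fintype.card A) #D ℓ μ where
  card := rfl
  regular u := by
    have hcard := card_commonNeighbors_circulantGraph h.zero_notMem h.neg_mem u u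
    rw [← SimpleGraph.card_neighborSet_eq_degree]
    simpa only [SimpleGraph.commonNeighbors_eq, Set.inter_self, sub_self, sub_zero,
      filter_mem_eq_inter, inter_self] using hcard
  of_adj u v huv := by
    rw [circulantGraph_adj_iff_sub_mem h.zero_notMem h.neg_mem] at huv
    rw [card_commonNeighbors_circulantGraph h.zero_notMem h.neg_mem, h.card_of_mem _ huv]
  of_not_adj u v huv hadj := by
    rw [circulantGraph_adj_iff_sub_mem h.zero_notMem h.neg_mem] at hadj
    rw [card_commonNeighbors_circulantGraph h.zero_notMem h.neg_mem,
      h.card_of_notMem _ hadj (sub_ne_zero.2 huv.symm)]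

end PartialDifferenceSet

/-- The connection set of the Shrikhande graph as a Cayley graph of `(ZMod 4)²`. -/
def shrikhandeConnectionSet : Finset (ZMod 4 × ZMod 4) :=
  {(0, 1), (0, 3), (1, 0), (3, 0), (1, 1), (3, 3)}

theorem shrikhande_eq_circulantGraph :
    shrikhande = SimpleGraph.circulantGraph (shrikhandeConnectionSet : Set (ZMod 4 × ZMod 4)) :=
  rfl

theorem isPartialDifferenceSet_shrikhandeConnectionSet :
    IsPartialDifferenceSet shrikhandeConnectionSet 2 2 where
  zero_notMem := by decide
  neg_mem := by decide
  card_of_mem := by decide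
  card_of_notMem := by decide

instance : DecidableRel shrikhande.Adj :=
  shrikhande_eq_circulantGraph ▸ inferInstance

theorem shrikhande_isSRGWith : shrikhande.IsSRGWith 16 6 2 2 :=
  isPartialDifferenceSet_shrikhandeConnectionSet.isSRGWith

/-- The domination number of the complement of the Shrikhande graph equals `3`: there are
three vertices dominating the graph, but no two vertices do. -/
theorem complement_shrikhande_domination_number_three :
    (∃ s1 s2 s3 : ZMod 4 × ZMod 4,
      ∀ x : ZMod 4 × ZMod 4, x ∉ ({s1, s2, s3} : Set (ZMod 4 × ZMod 4)) →
        (shrikhandeᶜ.Adj x s1 ∨ shrikhandeᶜ.Adj x s2 ∨ shrikhandeᶜ.Adj x s3)) ∧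
    (∀ u v : ZMod 4 × ZMod 4, ∃ w : ZMod 4 × ZMod 4,
      w ∉ ({u, v} : Set (ZMod 4 × ZMod 4)) ∧ ¬ shrikhandeᶜ.Adj w u ∧ ¬ shrikhandeᶜ.Adj w v) := by
  simpa [IsDominating, and_assoc] using complement_shrikhande_domination_number_three_general
    shrikhande_isSRGWith (by norm_num) (by norm_num) (by norm_num) (by norm_num)
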